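/- For η ∈ ⋀²W, define the bilinear form α_η on W by α_η(v, w) := θ(v ∧ w ∧ η). Then α_η is alternating, and α_η is nondegenerate if and only if η ∧ η ≠ 0 in ⋀⁴W (equivalently, if and only if η is not decomposable). -/

import Mathlib

/-!
Contraction `d⌋·` by a covector `d` is an antiderivation of the exterior algebra. For a basis `e` of
`V` with dual basis `e*` and `x ∈ ⋀ⁿV`, it satisfies the two Euler identities
`∑ eᵢ ∧ (eᵢ*⌋x) = n x` and `∑ eᵢ*⌋(eᵢ ∧ x) = (dim V - n) x`.

If `dim W = 4` and `v ∧ w ∧ η = 0` for all `w`, then `v ∧ η = 0`, by the second identity applied to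
`v ∧ η ∈ ⋀³W`. So `α_η` is degenerate iff some `v ≠ 0` satisfies `v ∧ η = 0`. Contracting this
equation by some `d` with `d v = 1` gives `η = v ∧ (d⌋η)`, so `η` is decomposable.

If `η ∧ η = 0` and `2 ≠ 0`, then contracting gives `(d⌋η) ∧ η = 0` for every `d`. If moreover
`η ≠ 0`, then some vector `d⌋η` is nonzero by the first identity, so again `η` is divisible by a
nonzero vector.
-/

open ExteriorAlgebra
open CliffordAlgebra (contractLeft contractLeft_ι_mul contractLeft_algebraMap)

section CommRing

variable {R M : Type*} [CommRing R] [AddCommGroup M] [Module R M] {n : ℕ}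
  {x : ExteriorAlgebra R M}

theorem ι_mul_ι_eq_neg (v w : M) : ι R v * ι R w = -(ι R w * ι R v) :=
  eq_neg_of_add_eq_zero_left (ι_add_mul_swap v w)

theorem ι_mul_mem_exteriorPower_succ (v : M) (hx : x ∈ ⋀[R]^n M) :
    ι R v * x ∈ ⋀[R]^(n + 1) M := by
  rw [exteriorPower, pow_succ']
  exact Submodule.mul_mem_mul ⟨v, rfl⟩ hx

theorem mul_ι_eq_neg_one_pow_smul (hx : x ∈ ⋀[R]^n M) (v : M) :
    x * ι R v = (-1 : R) ^ n • (ι R v * x) := by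
  induction hx using Submodule.pow_induction_on_left' with
  | algebraMap r => simp [Algebra.commutes]
  | add x y n _ _ hx hy => rw [add_mul, hx, hy, mul_add, smul_add]
  | mem_mul _ hm n x _ hx =>
    obtain ⟨m, rfl⟩ := hm
    rw [mul_assoc, hx, mul_smul_comm, ← mul_assoc, ι_mul_ι_eq_neg, neg_mul, mul_assoc, pow_succ']
    module

theorem contractLeft_mul_of_mem_exteriorPower (d : Module.Dual R M) (hx : x ∈ ⋀[R]^n M)
    (y : ExteriorAlgebra R M) :
    contractLeft d (x * y) = contractLeft d x * y + (-1 : R) ^ n • (x * contractLeft d y) := by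
  induction hx using Submodule.pow_induction_on_left' with
  | algebraMap r => simp [← Algebra.smul_def]
  | add x x' n _ _ hx hx' =>
    simp only [add_mul, map_add, hx, hx', smul_add]
    abel
  | mem_mul _ hm n x _ hx =>
    obtain ⟨m, rfl⟩ := hm
    simp only [mul_assoc, contractLeft_ι_mul, hx, mul_add, sub_mul, smul_mul_assoc, mul_smul_comm,
      pow_succ']
    module

theorem contractLeft_mem_exteriorPower_pred (d : Module.Dual R M) (hx : x ∈ ⋀[R]^n M) :
    contractLeft d x ∈ ⋀[R]^(n - 1) M := by
  induction hx using Submodule.pow_induction_on_left' with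
  | algebraMap r => simp
  | add x y n _ _ hx hy => simpa only [map_add] using add_mem hx hy
  | mem_mul _ hm n x hxn hx =>
    obtain ⟨m, rfl⟩ := hm
    rw [contractLeft_ι_mul]
    refine sub_mem (Submodule.smul_mem _ _ hxn) ?_
    cases n with
    | zero =>
      obtain ⟨r, rfl⟩ := Submodule.mem_one.mp hxn
      simp
    | succ n => exact ι_mul_mem_exteriorPower_succ m hx

theorem exists_ι_eq_contractLeft (d : Module.Dual R M) (hx : x ∈ ⋀[R]^2 M) :
    ∃ v : M, ι R v = contractLeft d x := by
  simpa only [Nat.add_one_sub_one, pow_one, LinearMap.mem_range]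
    using contractLeft_mem_exteriorPower_pred d hx

theorem eq_ι_mul_contractLeft_of_ι_mul_eq_zero {d : Module.Dual R M} {v : M} (hd : d v = 1)
    (h : ι R v * x = 0) : x = ι R v * contractLeft d x := by
  have contracted : contractLeft d (ι R v * x) = 0 := by rw [h, map_zero]
  rw [contractLeft_ι_mul, hd, one_smul] at contracted
  exact sub_eq_zero.mp contracted

theorem contractLeft_mul_self_of_mem_exteriorPower_two (d : Module.Dual R M) (hx : x ∈ ⋀[R]^2 M) :
    contractLeft d (x * x) = (2 : R) • (contractLeft d x * x) := by
  obtain ⟨v, hv⟩ := exists_ι_eq_contractLeft d hx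
  rw [contractLeft_mul_of_mem_exteriorPower d hx, ← hv, mul_ι_eq_neg_one_pow_smul hx, neg_one_sq,
    one_smul, one_smul, two_smul]

theorem ι_mul_ι_mul_self_eq_zero (v w : M) : ι R v * ι R w * ι R v = 0 := by
  rw [ι_mul_ι_eq_neg, neg_mul, mul_assoc, ι_sq_zero, mul_zero, neg_zero]

section Euler

variable {I : Type*} [Fintype I] (b : Module.Basis I R M)

theorem sum_ι_mul_contractLeft_coord (hx : x ∈ ⋀[R]^n M) :
    ∑ i, ι R (b i) * contractLeft (b.coord i) x = (n : R) • x := by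
  induction hx using Submodule.pow_induction_on_left' with
  | algebraMap r => simp
  | add x y n _ _ hx hy => simp only [map_add, mul_add, Finset.sum_add_distrib, hx, hy, smul_add]
  | mem_mul _ hm n x _ hx =>
    obtain ⟨m, rfl⟩ := hm
    have expand (i : I) : ι R (b i) * contractLeft (b.coord i) (ι R m * x) =
        ι R (b.repr m i • b i) * x + ι R m * (ι R (b i) * contractLeft (b.coord i) x) := by
      rw [contractLeft_ι_mul, mul_sub, ← mul_assoc, ι_mul_ι_eq_neg (b i) m, neg_mul, mul_assoc,
        sub_neg_eq_add, mul_smul_comm, map_smul, smul_mul_assoc, b.coord_apply]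
    simp only [expand, Finset.sum_add_distrib, ← Finset.sum_mul, ← Finset.mul_sum, ← map_sum,
      b.sum_repr, hx, mul_smul_comm, Nat.cast_succ, add_smul, one_smul, add_comm]

theorem sum_contractLeft_coord_ι_mul (hx : x ∈ ⋀[R]^n M) :
    ∑ i, contractLeft (b.coord i) (ι R (b i) * x) = ((Fintype.card I : R) - n) • x := by
  simp only [contractLeft_ι_mul, Finset.sum_sub_distrib, sum_ι_mul_contractLeft_coord b hx,
    b.coord_apply, b.repr_self, Finsupp.single_eq_same, one_smul, Finset.sum_const,
    Finset.card_univ, sub_smul, Nat.cast_smul_eq_nsmul]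

end Euler

section FreeModule

variable [Module.Free R M] [Module.Finite R M]

theorem eq_zero_of_forall_contractLeft_eq_zero (hn : IsUnit (n : R)) (hx : x ∈ ⋀[R]^n M)
    (h : ∀ d : Module.Dual R M, contractLeft d x = 0) : x = 0 := by
  have euler := sum_ι_mul_contractLeft_coord (Module.Free.chooseBasis R M) hx
  simp only [h, mul_zero, Finset.sum_const_zero] at euler
  exact hn.smul_eq_zero.mp euler.symm

variable [StrongRankCondition R]

theorem eq_zero_of_forall_ι_mul_eq_zero (hn : IsUnit ((Module.finrank R M : R) - n))
    (hx : x ∈ ⋀[R]^n M) (h : ∀ v : M, ι R v * x = 0) : x = 0 := by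
  have euler := sum_contractLeft_coord_ι_mul (Module.finBasis R M) hx
  simp only [h, map_zero, Finset.sum_const_zero, Fintype.card_fin] at euler
  exact hn.smul_eq_zero.mp euler.symm

theorem forall_ι_mul_ι_mul_eq_zero_iff (hn : IsUnit ((Module.finrank R M : R) - (n + 1 : ℕ)))
    (hx : x ∈ ⋀[R]^n M) (v : M) :
    (∀ w : M, ι R v * ι R w * x = 0) ↔ ι R v * x = 0 := by
  have swap (w : M) : ι R v * ι R w * x = -(ι R w * (ι R v * x)) := by
    rw [ι_mul_ι_eq_neg, neg_mul, mul_assoc]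
  simp only [swap, neg_eq_zero]
  exact ⟨eq_zero_of_forall_ι_mul_eq_zero hn (ι_mul_mem_exteriorPower_succ v hx),
    fun h w => by rw [h, mul_zero]⟩

end FreeModule

end CommRing

section Field

variable {K V : Type*} [Field K] [AddCommGroup V] [Module K V] {n : ℕ}
  {η : ExteriorAlgebra K V}

theorem exists_ne_zero_ι_mul_eq_zero_iff [Nontrivial V] (hη : η ∈ ⋀[K]^2 V) :
    (∃ v ≠ (0 : V), ι K v * η = 0) ↔ ∃ v w : V, η = ι K v * ι K w := by
  constructor
  · rintro ⟨v, hv, h⟩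
    obtain ⟨d, hd⟩ := Module.Projective.exists_dual_eq_one K hv
    obtain ⟨w, hw⟩ := exists_ι_eq_contractLeft d hη
    exact ⟨v, w, hw ▸ eq_ι_mul_contractLeft_of_ι_mul_eq_zero hd h⟩
  · rintro ⟨v, w, rfl⟩
    obtain rfl | hv := eq_or_ne v 0
    · obtain ⟨u, hu⟩ := exists_ne (0 : V)
      exact ⟨u, hu, by rw [map_zero, zero_mul, mul_zero]⟩
    · exact ⟨v, hv, by rw [← mul_assoc, ι_sq_zero, zero_mul]⟩

theorem forall_eq_zero_iff_not_exists_eq_ι_mul_ι [FiniteDimensional K V] [Nontrivial V]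
    (h3 : (Module.finrank K V : K) ≠ 3) (hη : η ∈ ⋀[K]^2 V) :
    (∀ v : V, (∀ w : V, ι K v * ι K w * η = 0) → v = 0) ↔ ¬ ∃ v w : V, η = ι K v * ι K w := by
  rw [← exists_ne_zero_ι_mul_eq_zero_iff hη]
  have hunit : IsUnit ((Module.finrank K V : K) - (2 + 1 : ℕ)) :=
    (sub_ne_zero.mpr (mod_cast h3)).isUnit
  simp only [forall_ι_mul_ι_mul_eq_zero_iff hunit hη]
  grind

theorem mul_self_eq_zero_iff_exists_eq_ι_mul_ι [FiniteDimensional K V] (h2 : (2 : K) ≠ 0)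
    (hη : η ∈ ⋀[K]^2 V) : η * η = 0 ↔ ∃ v w : V, η = ι K v * ι K w := by
  constructor
  · intro hsq
    obtain rfl | hη0 := eq_or_ne η 0
    · exact ⟨0, 0, by rw [map_zero, zero_mul]⟩
    obtain ⟨d, hd⟩ : ∃ d : Module.Dual K V, contractLeft d η ≠ 0 := by
      contrapose! hη0
      exact eq_zero_of_forall_contractLeft_eq_zero (IsUnit.mk0 _ (mod_cast h2)) hη hη0
    obtain ⟨v, hv⟩ := exists_ι_eq_contractLeft d hη
    have hv0 : v ≠ 0 := by rwa [← hv, Ne, ι_eq_zero_iff] at hd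
    have hvη : ι K v * η = 0 := by
      have contracted := contractLeft_mul_self_of_mem_exteriorPower_two d hη
      rw [hsq, map_zero, ← hv] at contracted
      exact (smul_eq_zero.mp contracted.symm).resolve_left h2
    have : Nontrivial V := ⟨v, 0, hv0⟩
    exact (exists_ne_zero_ι_mul_eq_zero_iff hη).mp ⟨v, hv0, hvη⟩
  · rintro ⟨v, w, rfl⟩
    rw [← mul_assoc, ι_mul_ι_mul_self_eq_zero, zero_mul]

theorem top_exteriorPower_injective_of_ne_zero [FiniteDimensional K V] {U : Type*}
    [AddCommGroup U] [Module K U] (hn : Module.finrank K V = n) {θ : ⋀[K]^n V →ₗ[K] U}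
    (hθ : θ ≠ 0) : Function.Injective θ := by
  have : IsSimpleModule K (⋀[K]^n V) :=
    isSimpleModule_iff_finrank_eq_one.mpr (by rw [exteriorPower.finrank_eq, hn, Nat.choose_self])
  exact LinearMap.injective_of_ne_zero hθ

end Field

/-- For `η ∈ ⋀²W`, the bilinear form `α_η(v, w) = θ(v ∧ w ∧ η)` on `W` is alternating, and it is
nondegenerate iff `η ∧ η ≠ 0` in `⋀⁴W`, equivalently iff `η` is not decomposable. -/
theorem stmt_10 (K : Type*) [Field K] (hK2 : (2 : K) ≠ 0)
    (W : Type*) [AddCommGroup W] [Module K W] [FiniteDimensional K W]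
    (hW : Module.finrank K W = 4)
    (wedge : ⋀[K]^2 W →ₗ[K] ⋀[K]^2 W →ₗ[K] ⋀[K]^4 W)
    (hwedge : ∀ x y : ⋀[K]^2 W,
      (wedge x y : ExteriorAlgebra K W) = (x : ExteriorAlgebra K W) * (y : ExteriorAlgebra K W))
    (θ : ⋀[K]^4 W →ₗ[K] K) (hθ : θ ≠ 0)
    (hmem : ∀ (v w : W) (y : ⋀[K]^2 W),
      ExteriorAlgebra.ι K v * ExteriorAlgebra.ι K w * (y : ExteriorAlgebra K W) ∈ ⋀[K]^4 W)
    (η : ⋀[K]^2 W)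
    (αη : W →ₗ[K] W →ₗ[K] K)
    (hαη : ∀ v w : W,
      αη v w = θ ⟨ExteriorAlgebra.ι K v * ExteriorAlgebra.ι K w * (η : ExteriorAlgebra K W),
        hmem v w η⟩) :
    (∀ v, αη v v = 0) ∧
    ((∀ v, (∀ w, αη v w = 0) → v = 0) ↔ wedge η η ≠ 0) ∧
    ((∀ v, (∀ w, αη v w = 0) → v = 0) ↔
      ¬ ∃ v w : W, (η : ExteriorAlgebra K W)
        = ExteriorAlgebra.ι K v * ExteriorAlgebra.ι K w) := by
  have : Nontrivial W := Module.nontrivial_of_finrank_pos (R := K) (by lia)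
  have finrank_ne_three : (Module.finrank K W : K) ≠ 3 := by
    rw [hW, ← sub_ne_zero]
    norm_num
  have apply_eq_zero_iff (v w : W) :
      αη v w = 0 ↔ ι K v * ι K w * (η : ExteriorAlgebra K W) = 0 := by
    rw [hαη, map_eq_zero_iff θ (top_exteriorPower_injective_of_ne_zero hW hθ),
      Submodule.mk_eq_zero]
  have nondegenerate_iff : (∀ v, (∀ w, αη v w = 0) → v = 0) ↔
      ¬ ∃ v w : W, (η : ExteriorAlgebra K W) = ι K v * ι K w := by
    simp only [apply_eq_zero_iff]
    exact forall_eq_zero_iff_not_exists_eq_ι_mul_ι finrank_ne_three η.2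
  have wedge_self_eq_zero_iff : wedge η η = 0 ↔
      ∃ v w : W, (η : ExteriorAlgebra K W) = ι K v * ι K w := by
    rw [← mul_self_eq_zero_iff_exists_eq_ι_mul_ι hK2 η.2, ← hwedge, Submodule.coe_eq_zero]
  refine ⟨fun v => ?_, nondegenerate_iff.trans wedge_self_eq_zero_iff.not.symm, nondegenerate_iff⟩
  rw [apply_eq_zero_iff, ι_sq_zero, zero_mul]
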